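/- (Sinai's theorem, in the generality noted in the paper's conclusion.) Let f be an expansive homeomorphism of the compact metric space M with expansivity constant ρ, having the shadowing property. Then for every β > 0 there exist ε with 0 < ε ≤ ρ/4 and δ > 0 such that W^s_ε(x) ∩ W^u_ε(y) consists of exactly one point [x, y] whenever dist(x, y) < δ, together with a Markov partition R_1, …, R_m of M for f (with respect to these ε and δ) in which every R_i has diameter less than β. -/

import Mathlib

open Set Filter Metric Topology

variable {M : Type*} [MetricSpace M] [CompactSpace M]

/-- `f` is expansive with expansivity constant `ρ`: if two orbits stay `ρ`-close for all
integer times, the points coincide. -/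
def IsExpansiveWith (f : Equiv.Perm M) (ρ : ℝ) : Prop :=
  ∀ x y : M, (∀ n : ℤ, dist ((f ^ n) x) ((f ^ n) y) ≤ ρ) → x = y

/-- The stable set `W^s(x)`. -/
def stableSet (f : Equiv.Perm M) (x : M) : Set M :=
  {y : M | Tendsto (fun n : ℤ => dist ((f ^ n) x) ((f ^ n) y)) atTop (𝓝 0)}

/-- The unstable set `W^u(x)`. -/
def unstableSet (f : Equiv.Perm M) (x : M) : Set M :=
  {y : M | Tendsto (fun n : ℤ => dist ((f ^ n) x) ((f ^ n) y)) atBot (𝓝 0)}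

/-- The `ε`-stable set `W^s_ε(x)`. -/
def epsStable (f : Equiv.Perm M) (ε : ℝ) (x : M) : Set M :=
  {y : M | ∀ n : ℤ, 0 ≤ n → dist ((f ^ n) x) ((f ^ n) y) ≤ ε}

/-- The `ε`-unstable set `W^u_ε(x)`. -/
def epsUnstable (f : Equiv.Perm M) (ε : ℝ) (x : M) : Set M :=
  {y : M | ∀ n : ℤ, n ≤ 0 → dist ((f ^ n) x) ((f ^ n) y) ≤ ε}

/-- Shadowing property: every `δ`-pseudo-orbit is `ε`-shadowed by a true orbit. -/
def HasShadowing (f : Equiv.Perm M) : Prop :=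
  ∀ ε : ℝ, 0 < ε → ∃ δ : ℝ, 0 < δ ∧ ∀ y : ℤ → M,
    (∀ n : ℤ, dist (f (y n)) (y (n + 1)) < δ) →
      ∃ z : M, ∀ n : ℤ, dist ((f ^ n) z) (y n) ≤ ε

/-- A rectangle: a nonempty set of diameter `< δ` closed under the bracket operation. -/
def IsRectangle (δ : ℝ) (br : M → M → M) (R : Set M) : Prop :=
  R.Nonempty ∧ Metric.diam R < δ ∧ ∀ x ∈ R, ∀ y ∈ R, br x y ∈ R

/-- Stable border `∂^s R`: points of `R` that are not interior points of
`W^u(x,R) = W^u_ε(x) ∩ R` in the subspace topology of `W^u_ε(x)`. -/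
def stableBorder (f : Equiv.Perm M) (ε : ℝ) (R : Set M) : Set M :=
  {x : M | x ∈ R ∧ ¬ ∃ U : Set M, IsOpen U ∧ x ∈ U ∧ U ∩ epsUnstable f ε x ⊆ R}

/-- Unstable border `∂^u R`: points of `R` that are not interior points of
`W^s(x,R) = W^s_ε(x) ∩ R` in the subspace topology of `W^s_ε(x)`. -/
def unstableBorder (f : Equiv.Perm M) (ε : ℝ) (R : Set M) : Set M :=
  {x : M | x ∈ R ∧ ¬ ∃ U : Set M, IsOpen U ∧ x ∈ U ∧ U ∩ epsStable f ε x ⊆ R}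

/-- A Markov partition: a finite family of proper rectangles covering `M`, with pairwise
disjoint interiors, satisfying the Markov inclusions for the invariant fibers. -/
def IsMarkovPartition (f : Equiv.Perm M) (ε δ : ℝ) (br : M → M → M) {m : ℕ}
    (R : Fin m → Set M) : Prop :=
  (∀ i, IsRectangle δ br (R i)) ∧
  (∀ i, R i = closure (interior (R i))) ∧
  (⋃ i, R i) = Set.univ ∧
  (∀ i j, i ≠ j → interior (R i) ∩ interior (R j) = ∅) ∧
  ∀ i j, ∀ x ∈ interior (R i) ∩ ⇑f ⁻¹' interior (R j),
    ⇑f '' (epsStable f ε x ∩ R i) ⊆ epsStable f ε (f x) ∩ R j ∧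
    epsUnstable f ε (f x) ∩ R j ⊆ ⇑f '' (epsUnstable f ε x ∩ R i)

/-!
This is Bowen's form of the argument. Expansivity and shadowing give a local product structure:
for nearby `x`, `y` the bracket `[x, y]` is the point shadowing the past of `y` followed by the
future of `x`. Shadowing the pseudo-orbits in a finite, sufficiently dense set yields a finite cover
by closed sets `T i` that are stable under brackets and satisfy the Markov property, because two
itineraries through the same centre can be spliced; but these sets overlap. To separate them, give
each point the *fiber type* recording, for each piece `T j` that contains it, which pieces its
stable and unstable fibers in `T j` meet. Brackets of points of equal fiber type have that type
again, and if two points on a common stable fiber have equal type, so do their images under `f`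
(likewise for unstable fibers and `f⁻¹`). Fiber types are locally constant on an open dense set, so
the closures of the interiors of the fiber type classes form a Markov partition.
-/

section Topology

variable {X : Type*} [TopologicalSpace X]

theorem closure_inter_interior_closure_subset {s : Set X} (hs : IsOpen s) (t : Set X) :
    closure s ∩ interior (closure t) ⊆ closure (s ∩ t) :=
  calc closure s ∩ interior (closure t)
    _ ⊆ closure (s ∩ interior (closure t)) := isOpen_interior.closure_inter
    _ ⊆ closure (s ∩ closure t) := closure_mono (inter_subset_inter_right s interior_subset)
    _ ⊆ closure (s ∩ t) := closure_minimal hs.inter_closure isClosed_closure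

theorem disjoint_interior_closure {s t : Set X} (hst : Disjoint s t) (ht : IsOpen t) :
    Disjoint (interior (closure s)) (interior (closure t)) :=
  (((hst.closure_left ht).mono_left interior_subset).closure_right isOpen_interior).mono_right
    interior_subset

theorem eventually_mem_iff_of_notMem_frontier {s : Set X} {x : X} (hx : x ∉ frontier s) :
    ∀ᶠ y in 𝓝 x, (y ∈ s ↔ x ∈ s) := by
  rw [frontier_eq_closure_inter_closure, mem_inter_iff, not_and_or] at hx
  by_cases hxs : x ∈ s
  · have hx' : x ∉ closure sᶜ := hx.resolve_left (not_not_intro (subset_closure hxs))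
    rw [← mem_compl_iff, ← interior_eq_compl_closure_compl] at hx'
    filter_upwards [mem_interior_iff_mem_nhds.1 hx'] with y hy using iff_of_true hy hxs
  · have hx' : x ∉ closure s := hx.resolve_right (not_not_intro (subset_closure hxs))
    filter_upwards [isClosed_closure.isOpen_compl.mem_nhds hx'] with y hy
      using iff_of_false (fun hys => hy (subset_closure hys)) hxs

theorem dense_setOf_eventually_mem_iff [BaireSpace X] {κ : Type*} [Finite κ] {F : κ → Set X}
    (hF : ∀ k, IsClosed (F k)) : Dense {x | ∀ᶠ y in 𝓝 x, ∀ k, (y ∈ F k ↔ x ∈ F k)} := by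
  have hdense : Dense (⋂ k, (frontier (F k))ᶜ) :=
    dense_iInter_of_isOpen (fun k => isClosed_frontier.isOpen_compl) fun k =>
      interior_eq_empty_iff_dense_compl.1 (interior_frontier (hF k))
  refine hdense.mono fun x hx => eventually_all.2 fun k => ?_
  exact eventually_mem_iff_of_notMem_frontier (mem_iInter.1 hx k)

end Topology

section LocalProduct

variable {X : Type*} [MetricSpace X] {f : X ≃ₜ X} {Ws Wu : X → Set X} {δ : ℝ} {br : X → X → X}

/-- `W x` behaves like a local stable set of `f` at `x`: membership is a closed relation that is
reflexive, symmetric, transitive at scale `δ`, preserved by `f`, and preserved by `f⁻¹` as long as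
the preimages stay `δ`-close. Local unstable sets are the local stable sets of `f⁻¹`. -/
structure IsLocalStable (f : X ≃ₜ X) (δ : ℝ) (W : X → Set X) : Prop where
  refl : ∀ x, x ∈ W x
  symm : ∀ {x y}, y ∈ W x → x ∈ W y
  trans : ∀ {x y z}, dist x z < δ → y ∈ W x → z ∈ W y → z ∈ W x
  isClosed : IsClosed {p : X × X | p.2 ∈ W p.1}
  map : ∀ {x y}, y ∈ W x → f y ∈ W (f x)
  map_symm : ∀ {x y}, dist (f.symm x) (f.symm y) < δ → y ∈ W x → f.symm y ∈ W (f.symm x)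

/-- A local product structure (canonical coordinates) for `f`: local stable sets `Ws` and local
unstable sets `Wu` of `δ`-close points meet in exactly one point, their bracket. -/
structure IsLocalProduct (f : X ≃ₜ X) (Ws Wu : X → Set X) (δ : ℝ) (br : X → X → X) : Prop where
  stable : IsLocalStable f δ Ws
  unstable : IsLocalStable f.symm δ Wu
  inter_eq : ∀ {x y}, dist x y < δ → Ws x ∩ Wu y = {br x y}

namespace IsLocalProduct

variable {x y z : X}

theorem dual (L : IsLocalProduct f Ws Wu δ br) :
    IsLocalProduct f.symm Wu Ws δ fun x y => br y x where
  stable := L.unstable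
  unstable := L.stable
  inter_eq {x y} hd := by rw [inter_comm, L.inter_eq (dist_comm x y ▸ hd)]

theorem bracket_mem (L : IsLocalProduct f Ws Wu δ br) (hd : dist x y < δ) :
    br x y ∈ Ws x ∩ Wu y :=
  L.inter_eq hd ▸ mem_singleton _

theorem eq_bracket (L : IsLocalProduct f Ws Wu δ br) (hd : dist x y < δ) (hs : z ∈ Ws x)
    (hu : z ∈ Wu y) : z = br x y :=
  eq_of_mem_singleton (L.inter_eq hd ▸ ⟨hs, hu⟩)

theorem bracket_eq_right (L : IsLocalProduct f Ws Wu δ br) (hd : dist x y < δ) (hs : y ∈ Ws x) :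
    br x y = y :=
  (L.eq_bracket hd hs (L.unstable.refl y)).symm

theorem bracket_eq_left (L : IsLocalProduct f Ws Wu δ br) (hd : dist x y < δ) (hu : x ∈ Wu y) :
    br x y = x :=
  (L.eq_bracket hd (L.stable.refl x) hu).symm

variable [CompactSpace X]

/-- By closedness of the two relations, every cluster value of the bracket at `(x, y)` lies in
`Ws x ∩ Wu y`. -/
theorem continuousAt_bracket (L : IsLocalProduct f Ws Wu δ br) (hd : dist x y < δ) :
    ContinuousAt (fun p : X × X => br p.1 p.2) (x, y) := by
  refine le_nhds_of_unique_clusterPt fun z hz => ?_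
  obtain ⟨u, hu, hbr⟩ := mapClusterPt_iff_ultrafilter.1 hz
  have hclose : ∀ᶠ p : X × X in u, dist p.1 p.2 < δ :=
    hu (continuous_dist.continuousAt.eventually_lt_const hd)
  have hfst : Tendsto Prod.fst (u : Filter (X × X)) (𝓝 x) :=
    (continuous_fst.tendsto (x, y)).mono_left hu
  have hsnd : Tendsto Prod.snd (u : Filter (X × X)) (𝓝 y) :=
    (continuous_snd.tendsto (x, y)).mono_left hu
  refine L.eq_bracket hd ?_ ?_
  · exact L.stable.isClosed.mem_of_tendsto (hfst.prodMk_nhds hbr)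
      (hclose.mono fun p hp => (L.bracket_mem hp).1)
  · exact L.unstable.isClosed.mem_of_tendsto (hsnd.prodMk_nhds hbr)
      (hclose.mono fun p hp => (L.bracket_mem hp).2)

theorem continuousAt_bracket_left (L : IsLocalProduct f Ws Wu δ br) (hd : dist x y < δ) :
    ContinuousAt (fun v => br v y) x :=
  (L.continuousAt_bracket hd).comp (f := fun v => (v, y)) (by fun_prop)

theorem continuousAt_bracket_right (L : IsLocalProduct f Ws Wu δ br) (hd : dist x y < δ) :
    ContinuousAt (br x) y :=
  (L.continuousAt_bracket hd).comp (f := fun v => (x, v)) (by fun_prop)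

end IsLocalProduct

end LocalProduct

section FiberType

variable {X ι : Type*} {W Ws Wu : X → Set X} {T : ι → Set X}

/-- The pairs `(j, k)` such that `x ∈ T j` and the fiber `W x ∩ T j` meets `T k`. -/
def fiberHits (W : X → Set X) (T : ι → Set X) (x : X) : Set (ι × ι) :=
  {p | x ∈ T p.1 ∧ (W x ∩ T p.1 ∩ T p.2).Nonempty}

/-- The combinatorial position of `x` relative to the cover `T`: which pieces its stable and
unstable fibers meet. -/
def fiberType (Ws Wu : X → Set X) (T : ι → Set X) (x : X) : Set (ι × ι) × Set (ι × ι) :=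
  (fiberHits Ws T x, fiberHits Wu T x)

theorem mk_self_mem_fiberHits {x : X} {j : ι} (hW : x ∈ W x) : (j, j) ∈ fiberHits W T x ↔ x ∈ T j :=
  ⟨And.left, fun hx => ⟨hx, x, ⟨hW, hx⟩, hx⟩⟩

theorem fiberType_eq_iff {x y : X} : fiberType Ws Wu T x = fiberType Ws Wu T y ↔
    fiberHits Ws T x = fiberHits Ws T y ∧ fiberHits Wu T x = fiberHits Wu T y :=
  Prod.mk_inj

variable [TopologicalSpace X] {x y : X} {τ σ : Set (ι × ι) × Set (ι × ι)}

/-- The open cell of points that have fiber type `τ` stably under perturbation. The closures of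
the nonempty cells are the rectangles of the Markov partition. -/
def cell (Ws Wu : X → Set X) (T : ι → Set X) (τ : Set (ι × ι) × Set (ι × ι)) : Set X :=
  interior {x | fiberType Ws Wu T x = τ}

theorem cell_swap (τ : Set (ι × ι) × Set (ι × ι)) : cell Wu Ws T τ.swap = cell Ws Wu T τ := by
  have hswap : ∀ x, fiberType Wu Ws T x = τ.swap ↔ fiberType Ws Wu T x = τ := fun x =>
    Prod.swap_inj (p := fiberType Ws Wu T x)
  simp only [cell, hswap]

theorem isOpen_cell (τ : Set (ι × ι) × Set (ι × ι)) : IsOpen (cell Ws Wu T τ) :=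
  isOpen_interior

theorem fiberType_eq_of_mem_cell (hx : x ∈ cell Ws Wu T τ) : fiberType Ws Wu T x = τ :=
  interior_subset (s := {x | fiberType Ws Wu T x = τ}) hx

theorem fiberType_eq_of_mem_cell_of_mem_cell (hx : x ∈ cell Ws Wu T τ) (hy : y ∈ cell Ws Wu T τ) :
    fiberType Ws Wu T x = fiberType Ws Wu T y :=
  (fiberType_eq_of_mem_cell hx).trans (fiberType_eq_of_mem_cell hy).symm

theorem mem_cell_iff_eventually :
    x ∈ cell Ws Wu T τ ↔ ∀ᶠ y in 𝓝 x, fiberType Ws Wu T y = τ :=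
  mem_interior_iff_mem_nhds

theorem disjoint_cell (hne : τ ≠ σ) : Disjoint (cell Ws Wu T τ) (cell Ws Wu T σ) :=
  disjoint_left.2 fun _ hτ hσ =>
    hne ((fiberType_eq_of_mem_cell hτ).symm.trans (fiberType_eq_of_mem_cell hσ))

end FiberType

section MarkovCover

variable {X ι : Type*} [MetricSpace X] {f : X ≃ₜ X} {Ws Wu : X → Set X} {δ : ℝ}
  {br : X → X → X} {T : ι → Set X}

/-- The Markov property at `x` for the pair `T i`, `T j`: with `W^s(x, T i) = Ws x ∩ T i` and
`W^u(f x, T j) = Wu (f x) ∩ T j`, the map `f` sends the first fiber into `T j` and `f⁻¹` sends the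
second one into `T i`. -/
structure IsMarkovTransition (f : X ≃ₜ X) (Ws Wu : X → Set X) (T : ι → Set X) (i j : ι) (x : X) :
    Prop where
  mem : x ∈ T i
  map_mem : f x ∈ T j
  mapsTo_stable : MapsTo f (Ws x ∩ T i) (T j)
  mapsTo_unstable : MapsTo f.symm (Wu (f x) ∩ T j) (T i)

/-- A cover by small closed sets, stable under brackets, every point of which has a Markov
transition out of each piece containing it and a Markov transition into each such piece. Unlike in
a Markov partition, the pieces may overlap. -/
structure IsMarkovCover (f : X ≃ₜ X) (Ws Wu : X → Set X) (δ : ℝ) (br : X → X → X)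
    (T : ι → Set X) : Prop extends IsLocalProduct f Ws Wu δ br where
  isClosed_piece : ∀ i, IsClosed (T i)
  exists_mem : ∀ x, ∃ i, x ∈ T i
  dist_lt_half : ∀ {i x y}, x ∈ T i → y ∈ T i → dist x y < δ / 2
  bracket_mem_piece : ∀ {i x y}, x ∈ T i → y ∈ T i → br x y ∈ T i
  exists_transition_from : ∀ {i x}, x ∈ T i → ∃ j, IsMarkovTransition f Ws Wu T i j x
  exists_transition_to : ∀ {j y}, y ∈ T j → ∃ i, IsMarkovTransition f Ws Wu T i j (f.symm y)

variable {x y : X} {i j : ι} {τ σ : Set (ι × ι) × Set (ι × ι)}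

theorem IsMarkovTransition.dual (h : IsMarkovTransition f Ws Wu T i j x) :
    IsMarkovTransition f.symm Wu Ws T j i (f x) where
  mem := h.map_mem
  map_mem := by rw [f.symm_apply_apply]; exact h.mem
  mapsTo_stable := h.mapsTo_unstable
  mapsTo_unstable := by rw [f.symm_apply_apply]; exact h.mapsTo_stable

namespace IsMarkovCover

theorem dual (C : IsMarkovCover f Ws Wu δ br T) :
    IsMarkovCover f.symm Wu Ws δ (fun x y => br y x) T where
  toIsLocalProduct := C.toIsLocalProduct.dual
  isClosed_piece := C.isClosed_piece
  exists_mem := C.exists_mem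
  dist_lt_half := C.dist_lt_half
  bracket_mem_piece hx hy := C.bracket_mem_piece hy hx
  exists_transition_from {j y} hy := by
    obtain ⟨i, hi⟩ := C.exists_transition_to hy
    exact ⟨i, f.apply_symm_apply y ▸ hi.dual⟩
  exists_transition_to hx := (C.exists_transition_from hx).imp fun _ => IsMarkovTransition.dual

theorem dist_lt (C : IsMarkovCover f Ws Wu δ br T) (hx : x ∈ T i) (hy : y ∈ T i) :
    dist x y < δ := by
  linarith [C.dist_lt_half hx hy, dist_nonneg (x := x) (y := y)]

theorem mem_piece_iff (C : IsMarkovCover f Ws Wu δ br T)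
    (h : fiberType Ws Wu T x = fiberType Ws Wu T y) (j : ι) : x ∈ T j ↔ y ∈ T j := by
  rw [← mk_self_mem_fiberHits (C.stable.refl x), ← mk_self_mem_fiberHits (C.stable.refl y),
    (fiberType_eq_iff.1 h).1]

theorem dist_lt_of_fiberType_eq (C : IsMarkovCover f Ws Wu δ br T)
    (h : fiberType Ws Wu T x = fiberType Ws Wu T y) : dist x y < δ := by
  obtain ⟨i, hi⟩ := C.exists_mem x
  exact C.dist_lt hi ((C.mem_piece_iff h i).1 hi)

theorem fiberHits_stable_subset (C : IsMarkovCover f Ws Wu δ br T) (hs : y ∈ Ws x)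
    (hmem : ∀ j, x ∈ T j → y ∈ T j) : fiberHits Ws T x ⊆ fiberHits Ws T y := by
  rintro ⟨j, k⟩ ⟨hxj, z, ⟨hz, hzj⟩, hzk⟩
  have hyz : z ∈ Ws y := C.stable.trans (C.dist_lt (hmem j hxj) hzj) (C.stable.symm hs) hz
  exact ⟨hmem j hxj, z, ⟨hyz, hzj⟩, hzk⟩

theorem fiberHits_stable_eq (C : IsMarkovCover f Ws Wu δ br T) (hs : y ∈ Ws x)
    (hmem : ∀ j, x ∈ T j ↔ y ∈ T j) : fiberHits Ws T x = fiberHits Ws T y :=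
  (C.fiberHits_stable_subset hs fun j => (hmem j).1).antisymm
    (C.fiberHits_stable_subset (C.stable.symm hs) fun j => (hmem j).2)

theorem bracket_mem_piece_iff (C : IsMarkovCover f Ws Wu δ br T)
    (h : fiberType Ws Wu T x = fiberType Ws Wu T y) (j : ι) : br x y ∈ T j ↔ x ∈ T j := by
  refine ⟨fun hj => ?_, fun hx => C.bracket_mem_piece hx ((C.mem_piece_iff h j).1 hx)⟩
  obtain ⟨hs, hu⟩ := C.bracket_mem (C.dist_lt_of_fiberType_eq h)
  obtain ⟨i, hxi⟩ := C.exists_mem x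
  have hyi : y ∈ T i := (C.mem_piece_iff h i).1 hxi
  have hbi : br x y ∈ T i := C.bracket_mem_piece hxi hyi
  have hyij : (i, j) ∈ fiberHits Wu T y := ⟨hyi, br x y, ⟨hu, hbi⟩, hj⟩
  obtain ⟨-, z, ⟨hz, hzi⟩, hzj⟩ : (i, j) ∈ fiberHits Wu T x :=
    (fiberType_eq_iff.1 h).2 ▸ hyij
  have hx : x = br (br x y) z :=
    C.eq_bracket (C.dist_lt hbi hzi) (C.stable.symm hs) (C.unstable.symm hz)
  exact hx ▸ C.bracket_mem_piece hj hzj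

theorem fiberType_bracket (C : IsMarkovCover f Ws Wu δ br T)
    (h : fiberType Ws Wu T x = fiberType Ws Wu T y) :
    fiberType Ws Wu T (br x y) = fiberType Ws Wu T x := by
  obtain ⟨hs, hu⟩ := C.bracket_mem (C.dist_lt_of_fiberType_eq h)
  have hmem := C.bracket_mem_piece_iff h
  refine fiberType_eq_iff.2 ⟨C.fiberHits_stable_eq (C.stable.symm hs) hmem, ?_⟩
  have hU : fiberHits Wu T (br x y) = fiberHits Wu T y :=
    C.dual.fiberHits_stable_eq (C.unstable.symm hu) fun j => (hmem j).trans (C.mem_piece_iff h j)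
  exact hU.trans (fiberType_eq_iff.1 h).2.symm

theorem map_mem_piece (C : IsMarkovCover f Ws Wu δ br T)
    (h : fiberType Ws Wu T x = fiberType Ws Wu T y) (hs : y ∈ Ws x) (hx : f x ∈ T j) :
    f y ∈ T j := by
  obtain ⟨i, hi⟩ := C.exists_transition_to hx
  rw [f.symm_apply_apply] at hi
  exact hi.mapsTo_stable ⟨hs, (C.mem_piece_iff h i).1 hi.mem⟩

theorem fiberHits_unstable_map_subset (C : IsMarkovCover f Ws Wu δ br T)
    (h : fiberType Ws Wu T x = fiberType Ws Wu T y) (hs : y ∈ Ws x) :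
    fiberHits Wu T (f x) ⊆ fiberHits Wu T (f y) := by
  rintro ⟨j, k⟩ ⟨hxj, w, ⟨hw, hwj⟩, hwk⟩
  have hyj : f y ∈ T j := C.map_mem_piece h hs hxj
  obtain ⟨s, hxs⟩ := C.exists_transition_to hxj
  obtain ⟨t, hzt⟩ := C.exists_transition_to hwk
  obtain ⟨z, rfl⟩ := f.surjective w
  rw [f.symm_apply_apply] at hxs hzt
  have hzs : z ∈ T s := f.symm_apply_apply z ▸ hxs.mapsTo_unstable ⟨hw, hwj⟩
  have hxz : z ∈ Wu x := by simpa only [f.symm_apply_apply] using C.unstable.map hw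
  obtain ⟨hys, z', ⟨hyz', hz's⟩, hz't⟩ : (s, t) ∈ fiberHits Wu T y :=
    (fiberType_eq_iff.1 h).2 ▸ ⟨hxs.mem, z, ⟨hxz, hzs⟩, hzt.mem⟩
  obtain ⟨hbz, hbz'⟩ := C.bracket_mem (C.dist_lt hzs hz's)
  have hbs : br z z' ∈ T s := C.bracket_mem_piece hzs hz's
  have hbk : f (br z z') ∈ T k := hzt.mapsTo_stable ⟨hbz, C.bracket_mem_piece hzt.mem hz't⟩
  have hyb : br z z' ∈ Wu y := C.unstable.trans (C.dist_lt hys hbs) hyz' hbz'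
  have hclose : dist (f y) (f (br z z')) < δ := by
    linarith [C.dist_lt_half hyj hwj, C.dist_lt_half hwk hbk,
      dist_triangle (f y) (f z) (f (br z z'))]
  have hfyb : f (br z z') ∈ Wu (f y) := C.unstable.map_symm hclose hyb
  have hfb : f (br z z') = br (f z) (f y) :=
    C.eq_bracket (C.dist_lt hwj hyj) (C.stable.map hbz) hfyb
  exact ⟨hyj, f (br z z'), ⟨hfyb, hfb ▸ C.bracket_mem_piece hwj hyj⟩, hbk⟩

theorem fiberType_map (C : IsMarkovCover f Ws Wu δ br T)
    (h : fiberType Ws Wu T x = fiberType Ws Wu T y) (hs : y ∈ Ws x) :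
    fiberType Ws Wu T (f x) = fiberType Ws Wu T (f y) := by
  have hs' : x ∈ Ws y := C.stable.symm hs
  refine fiberType_eq_iff.2 ⟨?_, ?_⟩
  · exact C.fiberHits_stable_eq (C.stable.map hs) fun j =>
      ⟨C.map_mem_piece h hs, C.map_mem_piece h.symm hs'⟩
  · exact (C.fiberHits_unstable_map_subset h hs).antisymm
      (C.fiberHits_unstable_map_subset h.symm hs')

theorem exists_closure_cell_subset (C : IsMarkovCover f Ws Wu δ br T)
    (hne : (cell Ws Wu T τ).Nonempty) : ∃ j, closure (cell Ws Wu T τ) ⊆ T j := by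
  obtain ⟨x, hx⟩ := hne
  obtain ⟨j, hj⟩ := C.exists_mem x
  exact ⟨j, closure_minimal (fun y hy =>
    (C.mem_piece_iff (fiberType_eq_of_mem_cell_of_mem_cell hx hy) j).1 hj) (C.isClosed_piece j)⟩

theorem dist_lt_of_mem_closure_cell (C : IsMarkovCover f Ws Wu δ br T)
    (hx : x ∈ closure (cell Ws Wu T τ)) (hy : y ∈ closure (cell Ws Wu T τ)) : dist x y < δ := by
  obtain ⟨j, hj⟩ := C.exists_closure_cell_subset (closure_nonempty_iff.1 ⟨x, hx⟩)
  exact C.dist_lt (hj hx) (hj hy)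

variable [CompactSpace X]

theorem bracket_mem_cell (C : IsMarkovCover f Ws Wu δ br T) (hx : x ∈ cell Ws Wu T τ)
    (hy : y ∈ cell Ws Wu T τ) : br x y ∈ cell Ws Wu T τ := by
  have hxy := fiberType_eq_of_mem_cell_of_mem_cell hx hy
  obtain ⟨hs, hu⟩ := C.bracket_mem (C.dist_lt_of_fiberType_eq hxy)
  have hzx : dist (br x y) x < δ := C.dist_lt_of_fiberType_eq (C.fiberType_bracket hxy)
  have hyz : dist y (br x y) < δ :=
    C.dist_lt_of_fiberType_eq (hxy.symm.trans (C.fiberType_bracket hxy).symm)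
  have hleft : Tendsto (fun v => br v x) (𝓝 (br x y)) (𝓝 x) := by
    simpa only [ContinuousAt, C.bracket_eq_right hzx (C.stable.symm hs)]
      using C.continuousAt_bracket_left hzx
  have hright : Tendsto (br y) (𝓝 (br x y)) (𝓝 y) := by
    simpa only [ContinuousAt, C.bracket_eq_left hyz (C.unstable.symm hu)]
      using C.continuousAt_bracket_right hyz
  rw [mem_cell_iff_eventually]
  filter_upwards [hleft.eventually (mem_cell_iff_eventually.1 hx),
    hright.eventually (mem_cell_iff_eventually.1 hy),
    (continuous_id.dist continuous_const).continuousAt.eventually_lt_const hzx,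
    (continuous_const.dist continuous_id).continuousAt.eventually_lt_const hyz]
    with v hvx hyv hdvx hdyv
  have htype := hvx.trans hyv.symm
  have hv : v = br (br v x) (br y v) := C.eq_bracket (C.dist_lt_of_fiberType_eq htype)
    (C.stable.symm (C.bracket_mem hdvx).1) (C.unstable.symm (C.bracket_mem hdyv).2)
  rw [hv, C.fiberType_bracket htype, hvx]

theorem map_mem_cell (C : IsMarkovCover f Ws Wu δ br T) (hx : x ∈ cell Ws Wu T τ)
    (hfx : f x ∈ cell Ws Wu T σ) (hy : y ∈ cell Ws Wu T τ) (hs : y ∈ Ws x) :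
    f y ∈ cell Ws Wu T σ := by
  have hd : dist y x < δ := C.dist_lt_of_mem_closure_cell (subset_closure hy) (subset_closure hx)
  have hbr : Tendsto (fun v => br v x) (𝓝 y) (𝓝 x) := by
    simpa only [ContinuousAt, C.bracket_eq_right hd (C.stable.symm hs)]
      using C.continuousAt_bracket_left hd
  rw [mem_cell_iff_eventually, ← f.map_nhds_eq, eventually_map]
  filter_upwards [mem_cell_iff_eventually.1 hy, hbr.eventually (mem_cell_iff_eventually.1 hx),
    hbr.eventually (f.continuous.continuousAt.eventually (mem_cell_iff_eventually.1 hfx)),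
    (continuous_id.dist continuous_const).continuousAt.eventually_lt_const hd]
    with v hv hbv hfbv hdv
  exact (C.fiberType_map (hv.trans hbv.symm) (C.bracket_mem hdv).1).trans hfbv

theorem bracket_mem_closure_cell (C : IsMarkovCover f Ws Wu δ br T)
    (hx : x ∈ closure (cell Ws Wu T τ)) (hy : y ∈ closure (cell Ws Wu T τ)) :
    br x y ∈ closure (cell Ws Wu T τ) := by
  have hxy : (x, y) ∈ closure (cell Ws Wu T τ ×ˢ cell Ws Wu T τ) := by
    rw [closure_prod_eq]
    exact ⟨hx, hy⟩
  exact (C.continuousAt_bracket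
    (C.dist_lt_of_mem_closure_cell hx hy)).continuousWithinAt.mem_closure hxy
      fun p hp => C.bracket_mem_cell hp.1 hp.2

theorem map_mem_closure_cell_of_mem_cell (C : IsMarkovCover f Ws Wu δ br T)
    (hx : x ∈ cell Ws Wu T τ) (hfx : f x ∈ cell Ws Wu T σ) (hy : y ∈ closure (cell Ws Wu T τ))
    (hs : y ∈ Ws x) : f y ∈ closure (cell Ws Wu T σ) := by
  have hd : ∀ v ∈ closure (cell Ws Wu T τ), dist x v < δ := fun v hv =>
    C.dist_lt_of_mem_closure_cell (subset_closure hx) hv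
  have hcont : ContinuousAt (fun v => f (br x v)) y :=
    f.continuous.continuousAt.comp (C.continuousAt_bracket_right (hd y hy))
  rw [← C.bracket_eq_right (hd y hy) hs]
  exact hcont.continuousWithinAt.mem_closure hy fun v hv =>
    C.map_mem_cell hx hfx (C.bracket_mem_cell hx hv) (C.bracket_mem (hd v (subset_closure hv))).1

theorem map_mem_closure_cell (C : IsMarkovCover f Ws Wu δ br T)
    (hx : x ∈ interior (closure (cell Ws Wu T τ)))
    (hfx : f x ∈ interior (closure (cell Ws Wu T σ)))
    (hy : y ∈ closure (cell Ws Wu T τ)) (hs : y ∈ Ws x) : f y ∈ closure (cell Ws Wu T σ) := by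
  have hd : ∀ v ∈ closure (cell Ws Wu T τ), dist v y < δ := fun v hv =>
    C.dist_lt_of_mem_closure_cell hv hy
  have hx' : x ∈ closure (cell Ws Wu T τ ∩ f ⁻¹' cell Ws Wu T σ) := by
    refine closure_inter_interior_closure_subset (isOpen_cell τ) _ ⟨interior_subset hx, ?_⟩
    rwa [← f.preimage_closure, ← f.preimage_interior]
  have hcont : ContinuousAt (fun v => f (br v y)) x :=
    f.continuous.continuousAt.comp (C.continuousAt_bracket_left (hd x (interior_subset hx)))
  rw [← C.bracket_eq_right (hd x (interior_subset hx)) hs, ← closure_closure]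
  refine hcont.continuousWithinAt.mem_closure hx' ?_
  rintro v ⟨hv, hfv⟩
  exact C.map_mem_closure_cell_of_mem_cell hv hfv
    (C.bracket_mem_closure_cell (subset_closure hv) hy) (C.bracket_mem (hd v (subset_closure hv))).1

theorem symm_map_mem_closure_cell (C : IsMarkovCover f Ws Wu δ br T)
    (hx : x ∈ interior (closure (cell Ws Wu T τ)))
    (hfx : f x ∈ interior (closure (cell Ws Wu T σ)))
    (hy : y ∈ closure (cell Ws Wu T σ)) (hu : y ∈ Wu (f x)) :
    f.symm y ∈ closure (cell Ws Wu T τ) := by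
  rw [← cell_swap] at hx hfx hy ⊢
  refine C.dual.map_mem_closure_cell hfx ?_ hy hu
  rwa [f.symm_apply_apply]

theorem isClosed_setOf_mem_fiberHits_stable (C : IsMarkovCover f Ws Wu δ br T) (p : ι × ι) :
    IsClosed {x | p ∈ fiberHits Ws T x} := by
  have hclosed : IsClosed {q : X × X | q.2 ∈ Ws q.1 ∩ T p.1 ∩ T p.2} :=
    (C.stable.isClosed.inter ((C.isClosed_piece p.1).preimage continuous_snd)).inter
      ((C.isClosed_piece p.2).preimage continuous_snd)
  have himage : {x | p ∈ fiberHits Ws T x} =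
      T p.1 ∩ Prod.fst '' {q : X × X | q.2 ∈ Ws q.1 ∩ T p.1 ∩ T p.2} := by
    ext x
    simp only [fiberHits, Set.Nonempty, mem_inter_iff, mem_ofPred_eq, mem_image, Prod.exists,
      exists_and_right, exists_eq_right]
  rw [himage]
  exact (C.isClosed_piece p.1).inter (isClosedMap_fst_of_compactSpace _ hclosed)

theorem dense_iUnion_cell [Finite ι] (C : IsMarkovCover f Ws Wu δ br T) :
    Dense (⋃ τ, cell Ws Wu T τ) := by
  let F : (ι × ι) ⊕ (ι × ι) → Set X :=
    Sum.elim (fun p => {x | p ∈ fiberHits Ws T x}) fun p => {x | p ∈ fiberHits Wu T x}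
  have hF : ∀ k, IsClosed (F k) := Sum.forall.2
    ⟨C.isClosed_setOf_mem_fiberHits_stable, C.dual.isClosed_setOf_mem_fiberHits_stable⟩
  refine (dense_setOf_eventually_mem_iff hF).mono fun x hx => ?_
  refine mem_iUnion.2 ⟨fiberType Ws Wu T x, mem_cell_iff_eventually.2 ?_⟩
  filter_upwards [hx] with y hy
  exact fiberType_eq_iff.2
    ⟨Set.ext fun p => hy (Sum.inl p), Set.ext fun p => hy (Sum.inr p)⟩

theorem iUnion_closure_cell [Finite ι] (C : IsMarkovCover f Ws Wu δ br T) :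
    ⋃ τ : {τ // (cell Ws Wu T τ).Nonempty}, closure (cell Ws Wu T τ) = univ := by
  have hclosed : IsClosed (⋃ τ : {τ // (cell Ws Wu T τ).Nonempty}, closure (cell Ws Wu T τ)) :=
    isClosed_iUnion_of_finite fun _ => isClosed_closure
  refine eq_univ_of_univ_subset ?_
  rw [← C.dense_iUnion_cell.closure_eq]
  refine closure_minimal (iUnion_subset fun τ x hx => ?_) hclosed
  exact mem_iUnion.2 ⟨⟨τ, x, hx⟩, subset_closure hx⟩

theorem diam_closure_cell_le (C : IsMarkovCover f Ws Wu δ br T) {d : ℝ}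
    (hT : ∀ i, diam (T i) ≤ d) (hne : (cell Ws Wu T τ).Nonempty) :
    diam (closure (cell Ws Wu T τ)) ≤ d := by
  obtain ⟨j, hj⟩ := C.exists_closure_cell_subset hne
  exact (diam_mono hj isBounded_of_compactSpace).trans (hT j)

end IsMarkovCover

end MarkovCover

section EpsilonSets

theorem zpow_symm_apply {Y : Type*} (f : Equiv.Perm Y) (n : ℤ) (x : Y) :
    (f.symm ^ n) x = (f ^ (-n)) x := by
  rw [← Equiv.Perm.inv_def, inv_zpow']

variable {X : Type*} [MetricSpace X] {f : Equiv.Perm X} {ε ρ δ : ℝ} {x y z w : X}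

theorem epsStable_symm (f : Equiv.Perm X) (ε : ℝ) : epsStable f.symm ε = epsUnstable f ε := by
  ext x y
  simp only [epsStable, epsUnstable, mem_ofPred_eq, zpow_symm_apply]
  exact ⟨fun h n hn => by simpa using h (-n) (by lia), fun h n hn => h (-n) (by lia)⟩

theorem epsUnstable_symm (f : Equiv.Perm X) (ε : ℝ) : epsUnstable f.symm ε = epsStable f ε :=
  (epsStable_symm f.symm ε).symm

theorem IsExpansiveWith.symm (hexp : IsExpansiveWith f ρ) : IsExpansiveWith f.symm ρ :=
  fun x y h => hexp x y fun n => by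
    simpa only [zpow_symm_apply, neg_neg] using h (-n)

theorem mem_epsStable_comm : y ∈ epsStable f ε x ↔ x ∈ epsStable f ε y := by
  simp only [epsStable, mem_ofPred_eq, dist_comm]

theorem map_mem_epsStable (h : y ∈ epsStable f ε x) : f y ∈ epsStable f ε (f x) := fun n hn => by
  simpa only [zpow_add_one, Equiv.Perm.mul_apply] using h (n + 1) (by lia)

theorem symm_map_mem_epsStable (hd : dist (f.symm x) (f.symm y) ≤ ε) (h : y ∈ epsStable f ε x) :
    f.symm y ∈ epsStable f ε (f.symm x) := fun n hn => by
  rcases hn.eq_or_lt with rfl | hn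
  · exact hd
  · simpa only [zpow_sub_one, Equiv.Perm.mul_apply, Equiv.Perm.inv_def] using h (n - 1) (by lia)

theorem continuous_toEquiv_zpow (f : X ≃ₜ X) (n : ℤ) : Continuous ⇑(f.toEquiv ^ n) := by
  induction n using Int.induction_on with
  | zero => exact continuous_id
  | succ n ih => rw [zpow_add_one, Equiv.Perm.coe_mul]; exact ih.comp f.continuous
  | pred n ih => rw [zpow_sub_one, Equiv.Perm.coe_mul]; exact ih.comp f.symm.continuous

theorem isClosed_setOf_mem_epsStable (f : X ≃ₜ X) (ε : ℝ) :
    IsClosed {p : X × X | p.2 ∈ epsStable f.toEquiv ε p.1} := by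
  have hset : {p : X × X | p.2 ∈ epsStable f.toEquiv ε p.1} =
      ⋂ (n : ℤ) (_ : 0 ≤ n), {p | dist ((f.toEquiv ^ n) p.1) ((f.toEquiv ^ n) p.2) ≤ ε} := by
    ext p
    simp only [epsStable, mem_ofPred_eq, mem_iInter]
  rw [hset]
  refine isClosed_iInter fun n => isClosed_iInter fun _ => isClosed_le ?_ continuous_const
  have := continuous_toEquiv_zpow f n
  fun_prop

theorem IsExpansiveWith.subsingleton_inter (hexp : IsExpansiveWith f ρ) (hε : 2 * ε ≤ ρ) :
    (epsStable f ε x ∩ epsUnstable f ε y).Subsingleton := by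
  rintro z ⟨hzs, hzu⟩ w ⟨hws, hwu⟩
  refine hexp z w fun n => ?_
  rcases le_total 0 n with hn | hn
  · linarith [hzs n hn, hws n hn, dist_triangle_left ((f ^ n) z) ((f ^ n) w) ((f ^ n) x)]
  · linarith [hzu n hn, hwu n hn, dist_triangle_left ((f ^ n) z) ((f ^ n) w) ((f ^ n) y)]

/-- The orbits of `w` and `z` stay `3ε`-close in the future and `ε`-close in the past, so
`w = z`. -/
theorem IsExpansiveWith.mem_epsStable_trans (hexp : IsExpansiveWith f ρ) (hε : 3 * ε ≤ ρ)
    (hxy : y ∈ epsStable f ε x) (hyz : z ∈ epsStable f ε y)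
    (hw : w ∈ epsStable f ε x ∩ epsUnstable f ε z) : z ∈ epsStable f ε x := by
  suffices hwz : w = z from hwz ▸ hw.1
  refine hexp w z fun n => ?_
  have hε' : 0 ≤ ε := dist_nonneg.trans (hxy 0 le_rfl)
  rcases le_total 0 n with hn | hn
  · linarith [mem_epsStable_comm.1 hw.1 n hn, hxy n hn, hyz n hn,
      dist_triangle4 ((f ^ n) w) ((f ^ n) x) ((f ^ n) y) ((f ^ n) z)]
  · linarith [hw.2 n hn, dist_comm ((f ^ n) w) ((f ^ n) z)]

theorem IsExpansiveWith.isLocalStable_epsStable {f : X ≃ₜ X} (hexp : IsExpansiveWith f.toEquiv ρ)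
    (hε : 0 ≤ ε) (hερ : 3 * ε ≤ ρ) (hδ : δ ≤ ε)
    (hinter : ∀ x y, dist x y < δ →
      (epsStable f.toEquiv ε x ∩ epsUnstable f.toEquiv ε y).Nonempty) :
    IsLocalStable f δ (epsStable f.toEquiv ε) where
  refl x n _ := by rwa [dist_self]
  symm := mem_epsStable_comm.1
  trans {x _ z} hd hxy hyz := by
    obtain ⟨w, hw⟩ := hinter x z hd
    exact hexp.mem_epsStable_trans hερ hxy hyz hw
  isClosed := isClosed_setOf_mem_epsStable f ε
  map := map_mem_epsStable
  map_symm hd := symm_map_mem_epsStable (hd.le.trans hδ)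

theorem IsExpansiveWith.isLocalProduct {f : X ≃ₜ X} (hexp : IsExpansiveWith f.toEquiv ρ)
    (hε : 0 ≤ ε) (hερ : 3 * ε ≤ ρ) (hδ : δ ≤ ε) {br : X → X → X}
    (hbr : ∀ x y, dist x y < δ → br x y ∈ epsStable f.toEquiv ε x ∩ epsUnstable f.toEquiv ε y) :
    IsLocalProduct f (epsStable f.toEquiv ε) (epsUnstable f.toEquiv ε) δ br where
  stable := hexp.isLocalStable_epsStable hε hερ hδ fun x y hd => ⟨br x y, hbr x y hd⟩
  unstable := by
    rw [← epsStable_symm]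
    refine IsExpansiveWith.isLocalStable_epsStable (f := f.symm) hexp.symm hε hερ hδ ?_
    intro x y hd
    have h := hbr y x (dist_comm x y ▸ hd)
    rw [← epsStable_symm, ← epsUnstable_symm] at h
    exact ⟨br y x, h.symm⟩
  inter_eq {x y} hd :=
    (hexp.subsingleton_inter (by linarith)).eq_singleton_of_mem (hbr x y hd)

end EpsilonSets

section PseudoOrbits

/-- The sequence that follows `u` at nonnegative times and `v` at negative times. -/
def splice {Y : Type*} (u v : ℤ → Y) (n : ℤ) : Y :=
  if 0 ≤ n then u n else v n

theorem splice_of_nonneg {Y : Type*} {u v : ℤ → Y} {n : ℤ} (hn : 0 ≤ n) : splice u v n = u n :=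
  if_pos hn

theorem splice_of_neg {Y : Type*} {u v : ℤ → Y} {n : ℤ} (hn : n < 0) : splice u v n = v n :=
  if_neg hn.not_ge

theorem splice_of_nonpos {Y : Type*} {u v : ℤ → Y} (huv : u 0 = v 0) {n : ℤ} (hn : n ≤ 0) :
    splice u v n = v n := by
  rcases hn.eq_or_lt with rfl | hn
  · rw [splice_of_nonneg le_rfl, huv]
  · exact splice_of_neg hn

theorem comp_splice {Y Z : Type*} (c : Y → Z) (u v : ℤ → Y) :
    c ∘ splice u v = splice (c ∘ u) (c ∘ v) :=
  funext fun _ => apply_ite c _ _ _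

variable {X : Type*} [MetricSpace X] {f : Equiv.Perm X} {α ε η ρ : ℝ} {u v : ℤ → X} {x z : X}

/-- An `α`-pseudo-orbit of `f`. -/
def IsPseudoOrbit (f : X → X) (α : ℝ) (u : ℤ → X) : Prop :=
  ∀ n : ℤ, dist (f (u n)) (u (n + 1)) < α

/-- Every `α`-pseudo-orbit of `f` is `η`-shadowed by an orbit: the shadowing property at a fixed
pair of scales. -/
def ShadowsPseudoOrbits (f : Equiv.Perm X) (α η : ℝ) : Prop :=
  ∀ u : ℤ → X, IsPseudoOrbit f α u → ∃ z, ∀ n : ℤ, dist ((f ^ n) z) (u n) ≤ η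

theorem isPseudoOrbit_orbit (f : Equiv.Perm X) (hα : 0 < α) (x : X) :
    IsPseudoOrbit f α fun n => (f ^ n) x := fun n => by
  rwa [← Equiv.Perm.mul_apply, ← zpow_one_add, add_comm, dist_self]

theorem IsPseudoOrbit.splice {f : X → X} (hu : IsPseudoOrbit f α u) (hv : IsPseudoOrbit f α v)
    (huv : dist (f (v (-1))) (u 0) < α) : IsPseudoOrbit f α (splice u v) := fun n => by
  rcases lt_trichotomy n (-1) with hn | rfl | hn
  · rw [splice_of_neg (by lia), splice_of_neg (by lia)]
    exact hv n
  · rwa [splice_of_neg (by lia), splice_of_nonneg (by lia)]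
  · rw [splice_of_nonneg (by lia), splice_of_nonneg (by lia)]
    exact hu n

theorem mem_epsStable_of_dist_le (hη : 2 * η ≤ ε)
    (hx : ∀ n : ℤ, 0 ≤ n → dist ((f ^ n) x) (u n) ≤ η)
    (hz : ∀ n : ℤ, 0 ≤ n → dist ((f ^ n) z) (u n) ≤ η) : z ∈ epsStable f ε x := fun n hn => by
  linarith [hx n hn, hz n hn, dist_triangle_right ((f ^ n) x) ((f ^ n) z) (u n)]

theorem mem_epsUnstable_of_dist_le (hη : 2 * η ≤ ε)
    (hx : ∀ n : ℤ, n ≤ 0 → dist ((f ^ n) x) (u n) ≤ η)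
    (hz : ∀ n : ℤ, n ≤ 0 → dist ((f ^ n) z) (u n) ≤ η) : z ∈ epsUnstable f ε x := fun n hn => by
  linarith [hx n hn, hz n hn, dist_triangle_right ((f ^ n) x) ((f ^ n) z) (u n)]

/-- The common point shadows the past of `y` followed by the future of `x`. -/
theorem HasShadowing.exists_inter_nonempty (hsh : HasShadowing f) (hε : 0 < ε) :
    ∃ δ > 0, ∀ x y, dist x y < δ → (epsStable f ε x ∩ epsUnstable f ε y).Nonempty := by
  obtain ⟨α, hα, hshadow⟩ := hsh (ε / 2) (half_pos hε)
  refine ⟨min α (ε / 2), lt_min hα (half_pos hε), fun x y hd => ?_⟩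
  have hyx : dist y x < min α (ε / 2) := dist_comm x y ▸ hd
  have hjump : dist (f ((f ^ (-1 : ℤ)) y)) ((f ^ (0 : ℤ)) x) < α := by
    rw [zpow_neg_one, Equiv.Perm.inv_def, Equiv.apply_symm_apply, zpow_zero, Equiv.Perm.one_apply]
    exact hyx.trans_le (min_le_left _ _)
  obtain ⟨z, hz⟩ :=
    hshadow _ ((isPseudoOrbit_orbit f hα x).splice (isPseudoOrbit_orbit f hα y) hjump)
  refine ⟨z, mem_epsStable_of_dist_le (mul_div_cancel₀ ε two_ne_zero).le (fun n hn => ?_)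
    fun n _ => hz n, mem_epsUnstable_of_dist_le (mul_div_cancel₀ ε two_ne_zero).le (fun n hn => ?_)
    fun n _ => hz n⟩
  · rw [splice_of_nonneg hn, dist_self]
    exact (half_pos hε).le
  · rcases hn.eq_or_lt with rfl | hn
    · exact hyx.le.trans (min_le_right _ _)
    · rw [splice_of_neg hn, dist_self]
      exact (half_pos hε).le

theorem HasShadowing.exists_isLocalProduct {f : X ≃ₜ X} (hsh : HasShadowing f.toEquiv)
    (hexp : IsExpansiveWith f.toEquiv ρ) (hε : 0 < ε) (hερ : 3 * ε ≤ ρ) :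
    ∃ δ > 0, δ ≤ ε ∧ ∃ br : X → X → X,
      IsLocalProduct f (epsStable f.toEquiv ε) (epsUnstable f.toEquiv ε) δ br := by
  obtain ⟨δ, hδ, hinter⟩ := hsh.exists_inter_nonempty hε
  have hinter' : ∀ x y, ∃ z, dist x y < δ →
      z ∈ epsStable f.toEquiv ε x ∩ epsUnstable f.toEquiv ε y := fun x y => by
    by_cases hd : dist x y < δ
    · exact (hinter x y hd).imp fun _ hz _ => hz
    · exact ⟨x, fun h => absurd h hd⟩
  choose br hbr using hinter'
  exact ⟨min δ ε, lt_min hδ hε, min_le_right _ _, br, hexp.isLocalProduct hε.le hερ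
    (min_le_right _ _) fun x y hd => hbr x y (hd.trans_le (min_le_left _ _))⟩

end PseudoOrbits

section Itineraries

variable {X ι : Type*} [MetricSpace X] {c : ι → X} {α η ε δ : ℝ} {x y : X} {p q : ℤ → ι}

/-- `q` is an itinerary of `x` through the points `c i`: an `α`-pseudo-orbit among them that the
orbit of `x` follows up to `η`. -/
structure IsItinerary (f : Equiv.Perm X) (c : ι → X) (α η : ℝ) (x : X) (q : ℤ → ι) : Prop where
  isPseudoOrbit : IsPseudoOrbit f α (c ∘ q)
  dist_le : ∀ n : ℤ, dist ((f ^ n) x) (c (q n)) ≤ η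

/-- The points having an itinerary that starts at `i`. These are the pieces of the Markov cover. -/
def cylinder (f : Equiv.Perm X) (c : ι → X) (α η : ℝ) (i : ι) : Set X :=
  {x | ∃ q, IsItinerary f c α η x q ∧ q 0 = i}

theorem dist_le_of_mem_cylinder {f : Equiv.Perm X} {i : ι} (hx : x ∈ cylinder f c α η i)
    (hy : y ∈ cylinder f c α η i) : dist x y ≤ 2 * η := by
  obtain ⟨p, hp, rfl⟩ := hx
  obtain ⟨q, hq, hq0⟩ := hy
  have hxp : dist x (c (p 0)) ≤ η := hp.dist_le 0
  have hyp : dist y (c (p 0)) ≤ η := hq0 ▸ hq.dist_le 0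
  linarith [dist_triangle_right x y (c (p 0))]

namespace IsItinerary

theorem shift {f : Equiv.Perm X} (hq : IsItinerary f c α η x q) :
    IsItinerary f c α η (f x) fun n => q (n + 1) where
  isPseudoOrbit n := hq.isPseudoOrbit (n + 1)
  dist_le n := by
    simpa only [zpow_add_one, Equiv.Perm.mul_apply] using hq.dist_le (n + 1)

theorem shift_symm {f : Equiv.Perm X} (hq : IsItinerary f c α η x q) :
    IsItinerary f c α η (f.symm x) fun n => q (n - 1) where
  isPseudoOrbit n := by
    simpa only [Function.comp_apply, sub_add_cancel, add_sub_cancel_right]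
      using hq.isPseudoOrbit (n - 1)
  dist_le n := by
    simpa only [zpow_sub_one, Equiv.Perm.mul_apply, Equiv.Perm.inv_def] using hq.dist_le (n - 1)

variable {f : X ≃ₜ X} {br : X → X → X}

theorem bracket (hp : IsItinerary f.toEquiv c α η x p) (hq : IsItinerary f.toEquiv c α η y q)
    (L : IsLocalProduct f (epsStable f.toEquiv ε) (epsUnstable f.toEquiv ε) δ br)
    (hS : ShadowsPseudoOrbits f.toEquiv α η) (hδ : 2 * η < δ) (hε : 2 * η ≤ ε) (h0 : p 0 = q 0) :
    IsItinerary f.toEquiv c α η (br x y) (splice p q) := by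
  have hjump : dist (f ((c ∘ q) (-1))) (c (p 0)) < α := h0 ▸ hq.isPseudoOrbit (-1)
  have hsplice : IsPseudoOrbit f.toEquiv α (c ∘ splice p q) :=
    comp_splice c p q ▸ hp.isPseudoOrbit.splice hq.isPseudoOrbit hjump
  obtain ⟨z, hz⟩ := hS _ hsplice
  have hd : dist x y < δ :=
    (dist_le_of_mem_cylinder ⟨p, hp, rfl⟩ ⟨q, hq, h0.symm⟩).trans_lt hδ
  have hstable : z ∈ epsStable f.toEquiv ε x := by
    refine mem_epsStable_of_dist_le hε (fun n hn => ?_) fun n _ => hz n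
    rw [Function.comp_apply, splice_of_nonneg hn]
    exact hp.dist_le n
  have hunstable : z ∈ epsUnstable f.toEquiv ε y := by
    refine mem_epsUnstable_of_dist_le hε (fun n hn => ?_) fun n _ => hz n
    rw [Function.comp_apply, splice_of_nonpos h0 hn]
    exact hq.dist_le n
  exact ⟨hsplice, L.eq_bracket hd hstable hunstable ▸ hz⟩

theorem isMarkovTransition (hq : IsItinerary f.toEquiv c α η x q)
    (L : IsLocalProduct f (epsStable f.toEquiv ε) (epsUnstable f.toEquiv ε) δ br)
    (hS : ShadowsPseudoOrbits f.toEquiv α η) (hδ : 2 * η < δ) (hε : 2 * η ≤ ε) :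
    IsMarkovTransition f (epsStable f.toEquiv ε) (epsUnstable f.toEquiv ε)
      (cylinder f.toEquiv c α η) (q 0) (q 1) x where
  mem := ⟨q, hq, rfl⟩
  map_mem := ⟨_, hq.shift, rfl⟩
  mapsTo_stable := by
    rintro y ⟨hs, r, hr, h0⟩
    have hd : dist x y < δ := (dist_le_of_mem_cylinder ⟨q, hq, rfl⟩ ⟨r, hr, h0⟩).trans_lt hδ
    have hbr := hq.bracket hr L hS hδ hε h0.symm
    rw [L.bracket_eq_right hd hs] at hbr
    exact ⟨_, hbr.shift, splice_of_nonneg (by lia)⟩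
  mapsTo_unstable := by
    rintro y ⟨hu, r, hr, h0⟩
    have hd : dist y (f x) < δ :=
      (dist_le_of_mem_cylinder ⟨r, hr, h0⟩ ⟨_, hq.shift, rfl⟩).trans_lt hδ
    have hbr : IsItinerary f.toEquiv c α η (br y (f x)) _ := hr.bracket hq.shift L hS hδ hε h0
    rw [L.bracket_eq_left hd hu] at hbr
    exact ⟨_, hbr.shift_symm, splice_of_neg (by lia)⟩

end IsItinerary

theorem isClosed_cylinder [Finite ι] (f : X ≃ₜ X) (c : ι → X) (α η : ℝ) (i : ι) :
    IsClosed (cylinder f.toEquiv c α η i) := by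
  let _ : TopologicalSpace ι := ⊥
  have : DiscreteTopology ι := ⟨rfl⟩
  have hc : Continuous c := continuous_of_discreteTopology
  have hpseudo : IsClosed {p : X × (ℤ → ι) | ∀ n, dist (f (c (p.2 n))) (c (p.2 (n + 1))) < α} := by
    rw [ofPred_forall]
    refine isClosed_iInter fun n => ?_
    exact (isClosed_discrete {w : ι × ι | dist (f (c w.1)) (c w.2) < α}).preimage
      (f := fun p : X × (ℤ → ι) => (p.2 n, p.2 (n + 1))) (by fun_prop)
  have hfollow : IsClosed {p : X × (ℤ → ι) | ∀ n, dist ((f.toEquiv ^ n) p.1) (c (p.2 n)) ≤ η} := by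
    rw [ofPred_forall]
    refine isClosed_iInter fun n => ?_
    have := continuous_toEquiv_zpow f n
    exact isClosed_le (by fun_prop) continuous_const
  have hstart : IsClosed {p : X × (ℤ → ι) | p.2 0 = i} := isClosed_eq (by fun_prop) continuous_const
  have himage : cylinder f.toEquiv c α η i =
      Prod.fst '' {p : X × (ℤ → ι) | IsItinerary f.toEquiv c α η p.1 p.2 ∧ p.2 0 = i} := by
    ext x
    simp only [cylinder, mem_ofPred_eq, mem_image, Prod.exists, exists_and_right, exists_eq_right]
  rw [himage]
  refine isClosedMap_fst_of_compactSpace _ ?_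
  convert (hpseudo.inter hfollow).inter hstart using 1
  ext p
  exact and_congr_left fun _ => ⟨fun h => ⟨h.1, h.2⟩, fun h => ⟨h.1, h.2⟩⟩

theorem exists_isItinerary {f : Equiv.Perm X} {γ : ℝ} (hα : γ ≤ α / 2) (hη : γ ≤ η)
    (hf : ∀ {x y}, dist x y < γ → dist (f x) (f y) < α / 2) (hc : ∀ x, ∃ i, dist x (c i) < γ)
    (x : X) : ∃ q, IsItinerary f c α η x q := by
  choose near hnear using hc
  refine ⟨fun n => near ((f ^ n) x), fun n => ?_, fun n => (hnear _).le.trans hη⟩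
  have hmap : dist ((f ^ (n + 1)) x) (f (c (near ((f ^ n) x)))) < α / 2 := by
    rw [add_comm, zpow_one_add, Equiv.Perm.mul_apply]
    exact hf (hnear _)
  calc dist (f (c (near ((f ^ n) x)))) (c (near ((f ^ (n + 1)) x)))
    _ ≤ dist ((f ^ (n + 1)) x) (f (c (near ((f ^ n) x)))) +
        dist ((f ^ (n + 1)) x) (c (near ((f ^ (n + 1)) x))) := dist_triangle_left _ _ _
    _ < α / 2 + α / 2 := add_lt_add hmap ((hnear _).trans_le hα)
    _ = α := add_halves α

theorem exists_finite_forall_exists_isItinerary [CompactSpace X] (f : X ≃ₜ X) (hα : 0 < α)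
    (hη : 0 < η) : ∃ P : Set X, P.Finite ∧
      ∀ x, ∃ q : ℤ → P, IsItinerary f.toEquiv (Subtype.val : P → X) α η x q := by
  obtain ⟨γ₀, hγ₀, hf⟩ := uniformContinuous_iff.1
    (CompactSpace.uniformContinuous_of_continuous f.continuous) (α / 2) (half_pos hα)
  obtain ⟨P, -, hPfin, hP⟩ := finite_cover_balls_of_compact (isCompact_univ (X := X))
    (lt_min hγ₀ (lt_min (half_pos hα) hη))
  refine ⟨P, hPfin, exists_isItinerary ((min_le_right _ _).trans (min_le_left _ _))
    ((min_le_right _ _).trans (min_le_right _ _)) (fun hd => hf (hd.trans_le (min_le_left _ _)))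
    fun x => ?_⟩
  obtain ⟨i, hi, hx⟩ := mem_iUnion₂.1 (hP (mem_univ x))
  exact ⟨⟨i, hi⟩, hx⟩

theorem isMarkovCover_cylinder [Finite ι] {f : X ≃ₜ X} {br : X → X → X}
    (L : IsLocalProduct f (epsStable f.toEquiv ε) (epsUnstable f.toEquiv ε) δ br)
    (hS : ShadowsPseudoOrbits f.toEquiv α η) (hη : 0 ≤ η) (hδ : 4 * η < δ) (hε : 2 * η ≤ ε)
    (hc : ∀ x, ∃ q, IsItinerary f.toEquiv c α η x q) :
    IsMarkovCover f (epsStable f.toEquiv ε) (epsUnstable f.toEquiv ε) δ br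
      (cylinder f.toEquiv c α η) := by
  have hδ' : 2 * η < δ := by linarith
  exact
  { toIsLocalProduct := L
    isClosed_piece := isClosed_cylinder f c α η
    exists_mem := fun x => (hc x).elim fun q hq => ⟨q 0, q, hq, rfl⟩
    dist_lt_half := fun hx hy => by linarith [dist_le_of_mem_cylinder hx hy]
    bracket_mem_piece := by
      rintro i x y ⟨p, hp, hp0⟩ ⟨q, hq, hq0⟩
      exact ⟨_, hp.bracket hq L hS hδ' hε (hp0.trans hq0.symm),
        (splice_of_nonneg le_rfl).trans hp0⟩
    exists_transition_from := by
      rintro i x ⟨q, hq, rfl⟩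
      exact ⟨q 1, hq.isMarkovTransition L hS hδ' hε⟩
    exists_transition_to := by
      rintro j y ⟨q, hq, rfl⟩
      exact ⟨q (0 - 1), hq.shift_symm.isMarkovTransition L hS hδ' hε⟩ }

theorem HasShadowing.exists_isMarkovCover [CompactSpace X] {f : X ≃ₜ X} {br : X → X → X}
    (hsh : HasShadowing f.toEquiv)
    (L : IsLocalProduct f (epsStable f.toEquiv ε) (epsUnstable f.toEquiv ε) δ br)
    (hη : 0 < η) (hδ : 4 * η < δ) (hε : 2 * η ≤ ε) :
    ∃ (P : Set X) (T : P → Set X), P.Finite ∧ (∀ i, diam (T i) ≤ 2 * η) ∧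
      IsMarkovCover f (epsStable f.toEquiv ε) (epsUnstable f.toEquiv ε) δ br T := by
  obtain ⟨α, hα, hS⟩ := hsh η hη
  obtain ⟨P, hPfin, hP⟩ := exists_finite_forall_exists_isItinerary f hα hη
  have : Finite P := hPfin
  refine ⟨P, _, hPfin, fun i => ?_, isMarkovCover_cylinder L hS hη.le hδ hε hP⟩
  exact diam_le_of_forall_dist_le (by positivity) fun x hx y hy => dist_le_of_mem_cylinder hx hy

end Itineraries

theorem IsMarkovCover.isMarkovPartition {X ι : Type*} [MetricSpace X] [CompactSpace X] [Finite ι]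
    {f : X ≃ₜ X} {ε δ d : ℝ} {br : X → X → X} {T : ι → Set X} {m : ℕ}
    (C : IsMarkovCover f (epsStable f.toEquiv ε) (epsUnstable f.toEquiv ε) δ br T)
    (hd : d < δ) (hT : ∀ i, diam (T i) ≤ d)
    (e : Fin m ≃ {τ // (cell (epsStable f.toEquiv ε) (epsUnstable f.toEquiv ε) T τ).Nonempty}) :
    IsMarkovPartition f.toEquiv ε δ br fun i =>
      closure (cell (epsStable f.toEquiv ε) (epsUnstable f.toEquiv ε) T (e i)) := by
  refine ⟨fun i => ⟨(e i).2.closure, (C.diam_closure_cell_le hT (e i).2).trans_lt hd,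
    fun x hx y hy => C.bracket_mem_closure_cell hx hy⟩, fun i => ?_, ?_, fun i j hij => ?_, ?_⟩
  · exact closure_interior_idem.symm
  · rw [← C.iUnion_closure_cell]
    exact e.surjective.iUnion_comp fun τ => closure (cell _ _ T τ)
  · have hne : (e i : Set (ι × ι) × Set (ι × ι)) ≠ e j :=
      Subtype.coe_ne_coe.2 (e.injective.ne hij)
    exact (disjoint_interior_closure (disjoint_cell hne) (isOpen_cell _)).inter_eq
  · rintro i j x ⟨hx, hfx⟩
    constructor
    · rintro _ ⟨y, ⟨hs, hy⟩, rfl⟩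
      exact ⟨C.stable.map hs, C.map_mem_closure_cell hx hfx hy hs⟩
    · rintro y ⟨hu, hy⟩
      refine ⟨f.symm y, ⟨?_, C.symm_map_mem_closure_cell hx hfx hy hu⟩, f.apply_symm_apply y⟩
      exact f.symm_apply_apply x ▸ C.unstable.map hu

/-- Sinai's theorem, general form: if `f` is an expansive homeomorphism of the
compact metric space `M` with expansivity constant `ρ` having the shadowing property, then for
every `β > 0` there are `0 < ε ≤ ρ/4`, `δ > 0` with a well-defined bracket, together with a
Markov partition of `M` for `f` whose pieces have diameter less than `β`. -/
theorem stmt_17 (f : Equiv.Perm M) (hf : Continuous ⇑f) (hf' : Continuous ⇑f.symm)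
    (ρ : ℝ) (hρ : 0 < ρ) (hexp : IsExpansiveWith f ρ) (hsh : HasShadowing f) :
    ∀ β : ℝ, 0 < β →
      ∃ (ε δ : ℝ) (br : M → M → M) (m : ℕ) (R : Fin m → Set M),
        0 < ε ∧ ε ≤ ρ / 4 ∧ 0 < δ ∧
        (∀ x y : M, dist x y < δ → epsStable f ε x ∩ epsUnstable f ε y = {br x y}) ∧
        IsMarkovPartition f ε δ br R ∧
        ∀ i, Metric.diam (R i) < β := by
  intro β hβ
  let F : M ≃ₜ M := ⟨f, hf, hf'⟩
  obtain ⟨δ, hδ, hδρ, br, L⟩ := HasShadowing.exists_isLocalProduct (f := F) hsh hexp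
    (ε := ρ / 4) (by linarith) (by linarith)
  have hη : 0 < min δ β / 8 := by positivity
  have hηδ : 8 * (min δ β / 8) ≤ δ := by linarith [min_le_left δ β]
  have hηβ : 8 * (min δ β / 8) ≤ β := by linarith [min_le_right δ β]
  obtain ⟨P, T, hPfin, hT, C⟩ := HasShadowing.exists_isMarkovCover (f := F) hsh L hη
    (by linarith) (by linarith)
  have : Finite P := hPfin
  let e := (Finite.equivFin
    {τ // (cell (epsStable f (ρ / 4)) (epsUnstable f (ρ / 4)) T τ).Nonempty}).symm
  exact ⟨ρ / 4, δ, br, _, _, by linarith, le_rfl, hδ, fun x y => L.inter_eq,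
    C.isMarkovPartition (by linarith) hT e,
    fun i => (C.diam_closure_cell_le hT (e i).2).trans_lt (by linarith)⟩
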